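/- On the rescaled Schwarzschild metric ĝ with Newman-Penrose tetrad l̂ = -√(F/2) ∂_R, n̂ = √(2/F)(∂_u + (R²F/2)∂_R), m̂ = (1/√2)(∂_θ + (i/sinθ)∂_φ), the nonvanishing spin coefficients are ε̂ = m/(2√(2F)), γ̂ = (5mR² - 2R)/(2√(2F)), β̂ = -α̂ = cotθ/(2√2), and κ̂ = σ̂ = λ̂ = τ̂ = ν̂ = π̂ = ρ̂ = μ̂ = 0. -/

import Mathlib

namespace Stmt13

open Complex

/-- Real partial derivative in coordinates `(u, R, θ, φ)` (fields independent of `φ`). -/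
noncomputable def pd (i : Fin 4) (f : ℝ → ℝ → ℝ → ℝ) : ℝ → ℝ → ℝ → ℝ := fun u R θ =>
  if i = 0 then deriv (fun u' => f u' R θ) u
  else if i = 1 then deriv (fun R' => f u R' θ) R
  else if i = 2 then deriv (fun θ' => f u R θ') θ
  else 0

/-- Complex partial derivative in coordinates `(u, R, θ, φ)`. -/
noncomputable def pdC (i : Fin 4) (f : ℝ → ℝ → ℝ → ℂ) : ℝ → ℝ → ℝ → ℂ := fun u R θ =>
  if i = 0 then deriv (fun u' => f u' R θ) u
  else if i = 1 then deriv (fun R' => f u R' θ) R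
  else if i = 2 then deriv (fun θ' => f u R θ') θ
  else 0

/-- Rescaled Schwarzschild metric `ĝ = R²F du² - 2 du dR - dθ² - sin²θ dφ²`, `F = 1-2mR`. -/
noncomputable def ghat (m : ℝ) (a b : Fin 4) : ℝ → ℝ → ℝ → ℝ := fun _ R θ =>
  if a = 0 ∧ b = 0 then R ^ 2 * (1 - 2 * m * R)
  else if (a = 0 ∧ b = 1) ∨ (a = 1 ∧ b = 0) then -1
  else if a = 2 ∧ b = 2 then -1
  else if a = 3 ∧ b = 3 then -(Real.sin θ) ^ 2
  else 0

/-- Inverse metric `ĝ^{ab}`. -/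
noncomputable def ginv (m : ℝ) (a b : Fin 4) : ℝ → ℝ → ℝ → ℝ := fun _ R θ =>
  if (a = 0 ∧ b = 1) ∨ (a = 1 ∧ b = 0) then -1
  else if a = 1 ∧ b = 1 then -(R ^ 2 * (1 - 2 * m * R))
  else if a = 2 ∧ b = 2 then -1
  else if a = 3 ∧ b = 3 then -(1 / (Real.sin θ) ^ 2)
  else 0

/-- Christoffel symbols `Γ^a_{bc}` of `ĝ`. -/
noncomputable def Γ (m : ℝ) (a b c : Fin 4) : ℝ → ℝ → ℝ → ℝ := fun u R θ =>
  (1 / 2) * ∑ d : Fin 4, ginv m a d u R θ *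
    (pd b (ghat m d c) u R θ + pd c (ghat m d b) u R θ - pd d (ghat m b c) u R θ)

/-- The Newman-Penrose tetrad vector `l̂ = -√(F/2) ∂_R`. -/
noncomputable def lv (m : ℝ) (a : Fin 4) : ℝ → ℝ → ℝ → ℂ := fun _ R _ =>
  if a = 1 then -(Real.sqrt ((1 - 2 * m * R) / 2) : ℝ) else 0

/-- The tetrad vector `n̂ = √(2/F) (∂_u + (R²F/2) ∂_R)`. -/
noncomputable def nv (m : ℝ) (a : Fin 4) : ℝ → ℝ → ℝ → ℂ := fun _ R _ =>
  if a = 0 then (Real.sqrt (2 / (1 - 2 * m * R)) : ℝ)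
  else if a = 1 then
    ((Real.sqrt (2 / (1 - 2 * m * R)) * (R ^ 2 * (1 - 2 * m * R) / 2) : ℝ) : ℂ)
  else 0

/-- The tetrad vector `m̂ = (1/√2)(∂_θ + (i/ sin θ) ∂_φ)`. -/
noncomputable def mv (a : Fin 4) : ℝ → ℝ → ℝ → ℂ := fun _ _ θ =>
  if a = 2 then ((1 / Real.sqrt 2 : ℝ) : ℂ)
  else if a = 3 then Complex.I / ((Real.sqrt 2 * Real.sin θ : ℝ) : ℂ)
  else 0

/-- The conjugate tetrad vector `m̄̂`. -/
noncomputable def mbv (a : Fin 4) : ℝ → ℝ → ℝ → ℂ := fun u R θ =>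
  starRingEnd ℂ (mv a u R θ)

/-- The lowered (covector) components `X_a = ĝ_{ab} X^b` of a (complex) vector field. -/
noncomputable def low (m : ℝ) (X : Fin 4 → ℝ → ℝ → ℝ → ℂ) (a : Fin 4) :
    ℝ → ℝ → ℝ → ℂ := fun u R θ =>
  ∑ b : Fin 4, (ghat m a b u R θ : ℂ) * X b u R θ

/-- The contraction `Z^a Y^b ∇_b X_a`, where `∇_b X_a = ∂_b X_a - Γ^c_{ba} X_c`. -/
noncomputable def cont (m : ℝ) (Z Y X : Fin 4 → ℝ → ℝ → ℝ → ℂ) :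
    ℝ → ℝ → ℝ → ℂ := fun u R θ =>
  ∑ a : Fin 4, ∑ b : Fin 4, Z a u R θ * Y b u R θ *
    (pdC b (low m X a) u R θ - ∑ c : Fin 4, (Γ m c b a u R θ : ℂ) * low m X c u R θ)

/-! `ĝ` is the product of a Lorentzian metric on the `(u, R)` surface and minus the round metric on
the sphere, so parallel transport preserves each of the null lines spanned by `l̂`, `n̂`, `m̂`, i.e.
`∇_b X_a = ω_b X_a` for a one-form `ω`. Hence `Z^a Y^b ∇_b X_a = (ω_b Y^b) (Z^a X_a)`, and all spin
coefficients follow from `n̂ · l̂ = 1`, `m̄̂ · m̂ = -1` and `m̂ · l̂ = m̄̂ · n̂ = 0`. -/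

/-- The covariant derivative `∇_b X_a = ∂_b X_a - Γ^c_{ba} X_c`, with `b` the first index. -/
noncomputable def covDeriv (m : ℝ) (X : Fin 4 → ℝ → ℝ → ℝ → ℂ) (b a : Fin 4) :
    ℝ → ℝ → ℝ → ℂ := fun u R θ =>
  pdC b (low m X a) u R θ - ∑ c : Fin 4, (Γ m c b a u R θ : ℂ) * low m X c u R θ

/-- The complex bilinear extension `Z^a X_a` of `ĝ`. -/
noncomputable def gDot (m : ℝ) (Z X : Fin 4 → ℝ → ℝ → ℝ → ℂ) : ℝ → ℝ → ℝ → ℂ := fun u R θ =>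
  ∑ a : Fin 4, Z a u R θ * low m X a u R θ

/-- The field `X` is recurrent with recurrence one-form `ω` at a point: `∇_b X_a = ω_b X_a`. -/
def IsRecurrentAt (m : ℝ) (X : Fin 4 → ℝ → ℝ → ℝ → ℂ) (ω : Fin 4 → ℂ) (u R θ : ℝ) : Prop :=
  ∀ b a, covDeriv m X b a u R θ = ω b * low m X a u R θ

lemma IsRecurrentAt.cont_eq {m u R θ : ℝ} {X : Fin 4 → ℝ → ℝ → ℝ → ℂ} {ω : Fin 4 → ℂ}
    (hX : IsRecurrentAt m X ω u R θ) (Z Y : Fin 4 → ℝ → ℝ → ℝ → ℂ) :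
    cont m Z Y X u R θ = (∑ b, ω b * Y b u R θ) * gDot m Z X u R θ := by
  calc cont m Z Y X u R θ
      = ∑ a, ∑ b, Z a u R θ * Y b u R θ * covDeriv m X b a u R θ := rfl
    _ = ∑ a, ∑ b, ω b * Y b u R θ * (Z a u R θ * low m X a u R θ) := by
      refine Finset.sum_congr rfl fun a _ => Finset.sum_congr rfl fun b _ => ?_
      rw [hX b a]
      ring
    _ = (∑ b, ω b * Y b u R θ) * gDot m Z X u R θ := by
      rw [Finset.sum_comm, gDot, Finset.sum_mul_sum]

/-- The recurrence one-form of `l̂`; that of `n̂` is its negative. It is the connection form of the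
boosts `(l̂, n̂) ↦ (c l̂, c⁻¹ n̂)`. -/
noncomputable def boostForm (m R : ℝ) : Fin 4 → ℂ :=
  ![-(R - 3 * m * R ^ 2 : ℝ), -(m / (1 - 2 * m * R) : ℝ), 0, 0]

/-- The recurrence one-form `-i cos θ dφ` of `m̂`. It is the connection form of the rotations
`m̂ ↦ e^{iχ} m̂`. -/
noncomputable def spinForm (θ : ℝ) : Fin 4 → ℂ :=
  ![0, 0, 0, -(I * (Real.cos θ : ℝ))]

lemma hasDerivAt_sqrt_of_deriv_eq_mul {f : ℝ → ℝ} {c x : ℝ}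
    (hf : HasDerivAt f (2 * c * f x) x) (hx : f x ≠ 0) :
    HasDerivAt (fun y => Real.sqrt (f y)) (c * Real.sqrt (f x)) x := by
  refine (hf.sqrt hx).congr_deriv ?_
  rw [mul_assoc, mul_div_mul_left _ _ two_ne_zero, mul_div_assoc, Real.div_sqrt]

section Christoffel

variable (m u R θ : ℝ)

lemma hasDerivAt_sq_mul_F :
    HasDerivAt (fun r : ℝ => r ^ 2 * (1 - 2 * m * r)) (2 * (R - 3 * m * R ^ 2)) R := by
  refine (((hasDerivAt_id' R).fun_pow 2).fun_mul
    (((hasDerivAt_id' R).const_mul (2 * m)).const_sub 1)).congr_deriv ?_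
  norm_num only
  ring

lemma pd_ghat (i a b : Fin 4) : pd i (ghat m a b) u R θ =
    if i = 1 ∧ a = 0 ∧ b = 0 then 2 * (R - 3 * m * R ^ 2)
    else if i = 2 ∧ a = 3 ∧ b = 3 then -(2 * Real.sin θ * Real.cos θ)
    else 0 := by
  have hR := (hasDerivAt_sq_mul_F m R).deriv
  fin_cases i <;> fin_cases a <;> fin_cases b <;> simp [pd, ghat, hR]

lemma Γ_zero (b c : Fin 4) : Γ m 0 b c u R θ =
    if b = 0 ∧ c = 0 then R - 3 * m * R ^ 2 else 0 := by
  simp only [Γ, pd_ghat, Fin.sum_univ_four]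
  fin_cases b <;> fin_cases c <;> simp [ginv]

lemma Γ_one (b c : Fin 4) : Γ m 1 b c u R θ =
    if b = 0 ∧ c = 0 then R ^ 2 * (1 - 2 * m * R) * (R - 3 * m * R ^ 2)
    else if (b = 0 ∧ c = 1) ∨ (b = 1 ∧ c = 0) then -(R - 3 * m * R ^ 2)
    else 0 := by
  simp only [Γ, pd_ghat, Fin.sum_univ_four]
  fin_cases b <;> fin_cases c <;> simp [ginv]
  ring

lemma Γ_two (b c : Fin 4) : Γ m 2 b c u R θ =
    if b = 3 ∧ c = 3 then -(Real.sin θ * Real.cos θ) else 0 := by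
  simp only [Γ, pd_ghat, Fin.sum_univ_four]
  fin_cases b <;> fin_cases c <;> simp [ginv]
  ring

lemma Γ_three (b c : Fin 4) : Γ m 3 b c u R θ =
    if (b = 2 ∧ c = 3) ∨ (b = 3 ∧ c = 2) then Real.cos θ / Real.sin θ else 0 := by
  simp only [Γ, pd_ghat, Fin.sum_univ_four]
  fin_cases b <;> fin_cases c <;> simp [ginv] <;> field_simp

end Christoffel

lemma pdC_eq_of_hasDerivAt_R {f : ℝ → ℂ} {f' : ℂ} {u R θ : ℝ} (hf : HasDerivAt f f' R)
    (b : Fin 4) : pdC b (fun _ r _ => f r) u R θ = if b = 1 then f' else 0 := by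
  fin_cases b <;> simp [pdC, hf.deriv]

lemma pdC_eq_of_hasDerivAt_θ {f : ℝ → ℂ} {f' : ℂ} {u R θ : ℝ} (hf : HasDerivAt f f' θ)
    (b : Fin 4) : pdC b (fun _ _ t => f t) u R θ = if b = 2 then f' else 0 := by
  fin_cases b <;> simp [pdC, hf.deriv]

section Tetrad

lemma low_lv (m : ℝ) (a : Fin 4) : low m (lv m) a = fun _ R _ =>
    if a = 0 then ((Real.sqrt ((1 - 2 * m * R) / 2) : ℝ) : ℂ) else 0 := by
  funext u R θ
  simp only [low, Fin.sum_univ_four]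
  fin_cases a <;> simp [ghat, lv]

lemma low_nv (m : ℝ) (a : Fin 4) : low m (nv m) a = fun _ R _ =>
    if a = 0 then ((Real.sqrt (2 / (1 - 2 * m * R)) * (R ^ 2 * (1 - 2 * m * R) / 2) : ℝ) : ℂ)
    else if a = 1 then ((-Real.sqrt (2 / (1 - 2 * m * R)) : ℝ) : ℂ) else 0 := by
  funext u R θ
  simp only [low, Fin.sum_univ_four]
  fin_cases a <;> simp [ghat, nv]
  ring

lemma low_mv (m : ℝ) (a : Fin 4) : low m mv a = fun _ _ θ =>
    if a = 2 then ((-(1 / Real.sqrt 2) : ℝ) : ℂ)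
    else if a = 3 then -I * ((Real.sin θ / Real.sqrt 2 : ℝ) : ℂ) else 0 := by
  funext u R θ
  simp only [low, Fin.sum_univ_four]
  fin_cases a <;> simp [ghat, mv, -ofReal_sin]
  field_simp

variable {m R : ℝ}

lemma hasDerivAt_sqrt_F_div_two (hF : 1 - 2 * m * R ≠ 0) :
    HasDerivAt (fun r : ℝ => Real.sqrt ((1 - 2 * m * r) / 2))
      (-(m / (1 - 2 * m * R)) * Real.sqrt ((1 - 2 * m * R) / 2)) R := by
  refine hasDerivAt_sqrt_of_deriv_eq_mul ?_ (div_ne_zero hF two_ne_zero)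
  refine ((((hasDerivAt_id' R).const_mul (2 * m)).const_sub 1).div_const 2).congr_deriv ?_
  field_simp

lemma hasDerivAt_sqrt_two_div_F (hF : 1 - 2 * m * R ≠ 0) :
    HasDerivAt (fun r : ℝ => Real.sqrt (2 / (1 - 2 * m * r)))
      (m / (1 - 2 * m * R) * Real.sqrt (2 / (1 - 2 * m * R))) R := by
  refine hasDerivAt_sqrt_of_deriv_eq_mul ?_ (div_ne_zero two_ne_zero hF)
  refine ((hasDerivAt_const R 2).fun_div
    (((hasDerivAt_id' R).const_mul (2 * m)).const_sub 1) hF).congr_deriv ?_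
  field_simp
  ring

lemma pdC_low_lv (u θ : ℝ) (hF : 1 - 2 * m * R ≠ 0) (b a : Fin 4) :
    pdC b (low m (lv m) a) u R θ =
      if b = 1 then -(m / (1 - 2 * m * R) : ℝ) * low m (lv m) a u R θ else 0 := by
  rw [low_lv]
  refine pdC_eq_of_hasDerivAt_R ?_ b
  split_ifs
  · simpa only [ofReal_mul, ofReal_neg] using (hasDerivAt_sqrt_F_div_two hF).ofReal_comp
  · simpa only [mul_zero] using hasDerivAt_const R (0 : ℂ)

lemma pdC_low_nv (u θ : ℝ) (hF : 1 - 2 * m * R ≠ 0) (b a : Fin 4) :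
    pdC b (low m (nv m) a) u R θ =
      if b = 1 then (m / (1 - 2 * m * R) : ℝ) * low m (nv m) a u R θ +
        if a = 0 then ((Real.sqrt (2 / (1 - 2 * m * R)) * (R - 3 * m * R ^ 2) : ℝ) : ℂ) else 0
      else 0 := by
  have hsqrt := hasDerivAt_sqrt_two_div_F hF
  rw [low_nv]
  refine pdC_eq_of_hasDerivAt_R ?_ b
  split_ifs
  · refine (hsqrt.fun_mul
      ((hasDerivAt_sq_mul_F m R).div_const 2)).ofReal_comp.congr_deriv ?_
    rw [← ofReal_mul, ← ofReal_add]
    congr 1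
    ring
  · refine hsqrt.fun_neg.ofReal_comp.congr_deriv ?_
    rw [← ofReal_mul, add_zero, mul_neg]
  · simpa only [mul_zero, add_zero] using hasDerivAt_const R (0 : ℂ)

lemma pdC_low_mv (m u R θ : ℝ) (b a : Fin 4) :
    pdC b (low m mv a) u R θ =
      if b = 2 then if a = 3 then -I * ((Real.cos θ / Real.sqrt 2 : ℝ) : ℂ) else 0 else 0 := by
  rw [low_mv]
  refine pdC_eq_of_hasDerivAt_θ ?_ b
  split_ifs with ha₂ ha₃ ha₃
  · simp [ha₂] at ha₃
  · exact hasDerivAt_const θ _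
  · exact ((Real.hasDerivAt_sin θ).div_const (Real.sqrt 2)).ofReal_comp.const_mul (-I)
  · exact hasDerivAt_const θ _

lemma isRecurrentAt_lv (u θ : ℝ) (hF : 1 - 2 * m * R ≠ 0) :
    IsRecurrentAt m (lv m) (boostForm m R) u R θ := by
  intro b a
  simp only [covDeriv, Fin.sum_univ_four, pdC_low_lv u θ hF]
  simp only [low_lv, Γ_zero]
  generalize Real.sqrt ((1 - 2 * m * R) / 2) = s
  fin_cases b <;> fin_cases a <;> simp [boostForm, -neg_sub]

lemma isRecurrentAt_nv (u θ : ℝ) (hF : 1 - 2 * m * R ≠ 0) :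
    IsRecurrentAt m (nv m) (-boostForm m R) u R θ := by
  intro b a
  simp only [covDeriv, Fin.sum_univ_four, pdC_low_nv u θ hF]
  simp only [low_nv, Γ_zero, Γ_one]
  generalize Real.sqrt (2 / (1 - 2 * m * R)) = t
  fin_cases b <;> fin_cases a <;> simp [boostForm] <;> ring

lemma isRecurrentAt_mv (m u R : ℝ) {θ : ℝ} (hθ : Real.sin θ ≠ 0) :
    IsRecurrentAt m mv (spinForm θ) u R θ := by
  intro b a
  simp only [covDeriv, Fin.sum_univ_four, pdC_low_mv]
  simp only [low_mv, Γ_two, Γ_three, spinForm]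
  generalize Real.sin θ = S at *
  generalize Real.cos θ = C
  have hS : (S : ℂ) ≠ 0 := ofReal_ne_zero.mpr hθ
  fin_cases b <;> fin_cases a <;> simp
  · field_simp
    ring
  · field_simp
  · linear_combination -(S * C / Real.sqrt 2 : ℂ) * I_sq

lemma gDot_mv_lv (m u R θ : ℝ) : gDot m mv (lv m) u R θ = 0 := by
  simp [gDot, low_lv, mv]

lemma gDot_mbv_nv (m u R θ : ℝ) : gDot m mbv (nv m) u R θ = 0 := by
  simp [gDot, low_nv, mbv, mv, Fin.sum_univ_four]

lemma gDot_nv_lv (u θ : ℝ) (hF : 0 < 1 - 2 * m * R) : gDot m (nv m) (lv m) u R θ = 1 := by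
  simp [gDot, low_lv, nv, (Real.sqrt_pos.mpr hF).ne']

lemma gDot_mbv_mv (m u R : ℝ) {θ : ℝ} (hθ : Real.sin θ ≠ 0) : gDot m mbv mv u R θ = -1 := by
  have hS : ((Real.sin θ : ℝ) : ℂ) ≠ 0 := ofReal_ne_zero.mpr hθ
  have hsqrt : ((Real.sqrt 2 : ℝ) : ℂ) ^ 2 = 2 := by
    rw [← ofReal_pow, Real.sq_sqrt zero_le_two, ofReal_ofNat]
  simp only [gDot, low_mv, mbv, mv, Fin.sum_univ_four, Fin.isValue, Fin.reduceEq, ↓reduceIte,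
    map_div₀, map_mul, map_zero, conj_I, conj_ofReal, ofReal_mul, ofReal_div, ofReal_neg,
    ofReal_one]
  field_simp
  simp only [I_sq, hsqrt]
  norm_num

end Tetrad

/-- The one-form `ω` for which `½ (n̂^a Y^b ∇_b l̂_a - m̄̂^a Y^b ∇_b m̂_a) = ½ ω_b Y^b`; the choices
`Y = l̂, n̂, m̂, m̄̂` give `ε̂, γ̂, β̂, α̂`. -/
noncomputable def spinConnectionForm (m R θ : ℝ) : Fin 4 → ℂ :=
  boostForm m R + spinForm θ

section Components

lemma sqrt_div_two {x : ℝ} (hx : 0 ≤ x) : Real.sqrt (x / 2) = x / Real.sqrt (2 * x) := by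
  rcases hx.eq_or_lt with rfl | hx
  · simp
  · rw [← Real.sqrt_sq hx.le, ← Real.sqrt_div (sq_nonneg x), Real.sqrt_sq hx.le]
    congr 1
    field_simp

lemma sqrt_two_div (x : ℝ) : Real.sqrt (2 / x) = 2 / Real.sqrt (2 * x) := by
  rw [← mul_div_mul_left 2 x two_ne_zero, Real.sqrt_div (by norm_num),
    Real.sqrt_mul_self zero_le_two]

lemma sum_spinConnectionForm_mul (m R θ : ℝ) (Y : Fin 4 → ℂ) :
    ∑ b, spinConnectionForm m R θ b * Y b =
      -((R - 3 * m * R ^ 2) * Y 0 + m / (1 - 2 * m * R) * Y 1 + I * (Real.cos θ : ℝ) * Y 3) := by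
  simp only [spinConnectionForm, boostForm, spinForm, Pi.add_apply, Fin.sum_univ_four, Fin.isValue,
    Matrix.cons_val]
  push_cast
  ring

variable {m R : ℝ}

lemma half_sum_spinConnectionForm_mul_lv (u θ : ℝ) (hF : 0 < 1 - 2 * m * R) :
    (1 / 2 : ℂ) * ∑ b, spinConnectionForm m R θ b * lv m b u R θ =
      ((m / (2 * Real.sqrt (2 * (1 - 2 * m * R))) : ℝ) : ℂ) := by
  have hF' : (1 - 2 * m * R : ℂ) ≠ 0 := mod_cast hF.ne'
  rw [sum_spinConnectionForm_mul]
  simp only [lv, sqrt_div_two hF.le, Fin.isValue, Fin.reduceEq, zero_ne_one, ↓reduceIte]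
  generalize Real.sqrt (2 * (1 - 2 * m * R)) = s
  push_cast
  generalize (1 - 2 * m * R : ℂ) = F at hF' ⊢
  field_simp
  ring

lemma half_sum_spinConnectionForm_mul_nv (u θ : ℝ) (hF : 1 - 2 * m * R ≠ 0) :
    (1 / 2 : ℂ) * ∑ b, spinConnectionForm m R θ b * nv m b u R θ =
      (((5 * m * R ^ 2 - 2 * R) / (2 * Real.sqrt (2 * (1 - 2 * m * R))) : ℝ) : ℂ) := by
  have hF' : (1 - 2 * m * R : ℂ) ≠ 0 := mod_cast hF
  rw [sum_spinConnectionForm_mul]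
  simp only [nv, sqrt_two_div, Fin.isValue, Fin.reduceEq, one_ne_zero, ↓reduceIte]
  generalize Real.sqrt (2 * (1 - 2 * m * R)) = s
  push_cast
  generalize (1 - 2 * m * R : ℂ) = F at hF' ⊢
  field_simp
  ring

lemma half_sum_spinConnectionForm_mul_mv (m u R θ : ℝ) :
    (1 / 2 : ℂ) * ∑ b, spinConnectionForm m R θ b * mv b u R θ =
      ((Real.cos θ / Real.sin θ / (2 * Real.sqrt 2) : ℝ) : ℂ) := by
  rw [sum_spinConnectionForm_mul]
  simp only [mv, Fin.isValue, Fin.reduceEq, ↓reduceIte, ofReal_mul, ofReal_div, ofReal_ofNat]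
  linear_combination -(Real.cos θ / (2 * Real.sqrt 2 * Real.sin θ) : ℂ) * I_sq

lemma half_sum_spinConnectionForm_mul_mbv (m u R θ : ℝ) :
    (1 / 2 : ℂ) * ∑ b, spinConnectionForm m R θ b * mbv b u R θ =
      -((Real.cos θ / Real.sin θ / (2 * Real.sqrt 2) : ℝ) : ℂ) := by
  rw [sum_spinConnectionForm_mul]
  simp only [mbv, mv, Fin.isValue, Fin.reduceEq, ↓reduceIte, map_div₀, map_mul,
    map_zero, conj_I, conj_ofReal, ofReal_mul, ofReal_div, ofReal_ofNat]
  linear_combination (Real.cos θ / (2 * Real.sqrt 2 * Real.sin θ) : ℂ) * I_sq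

end Components

/-- At `Y = l̂, m̂, m̄̂, n̂` the first equation gives `κ̂, σ̂, ρ̂, τ̂`; at `Y = n̂, m̄̂, m̂, l̂`
the second gives `ν̂, λ̂, μ̂, π̂`. -/
theorem rescaled_spin_coefficients_general (m u R θ : ℝ)
    (hF : 0 < 1 - 2 * m * R) (hθ : Real.sin θ ≠ 0) (Y : Fin 4 → ℝ → ℝ → ℝ → ℂ) :
    cont m mv Y (lv m) u R θ = 0 ∧
    cont m mbv Y (nv m) u R θ = 0 ∧
    (1 / 2 : ℂ) * (cont m (nv m) Y (lv m) u R θ - cont m mbv Y mv u R θ)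
      = 1 / 2 * ∑ b, spinConnectionForm m R θ b * Y b u R θ := by
  have hlv := isRecurrentAt_lv u θ hF.ne'
  have hnv := isRecurrentAt_nv u θ hF.ne'
  have hmv := isRecurrentAt_mv m u R hθ
  refine ⟨?_, ?_, ?_⟩
  · rw [hlv.cont_eq, gDot_mv_lv, mul_zero]
  · rw [hnv.cont_eq, gDot_mbv_nv, mul_zero]
  · rw [hlv.cont_eq, hmv.cont_eq, gDot_nv_lv u θ hF, gDot_mbv_mv m u R hθ, mul_one, mul_neg_one,
      sub_neg_eq_add, ← Finset.sum_add_distrib]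
    simp only [spinConnectionForm, Pi.add_apply, add_mul]

/-- for the rescaled Schwarzschild metric with the Newman-Penrose tetrad
`l̂ = -√(F/2) ∂_R`, `n̂ = √(2/F)(∂_u + (R²F/2)∂_R)`, `m̂ = (1/√2)(∂_θ + (i/sinθ)∂_φ)`,
the spin coefficients are
`κ̂ = σ̂ = λ̂ = τ̂ = ν̂ = π̂ = ρ̂ = μ̂ = 0`, `ε̂ = m/(2√(2F))`,
`γ̂ = (5mR² - 2R)/(2√(2F))`, `β̂ = -α̂ = cot θ/(2√2)`. -/
theorem rescaled_spin_coefficients (m u R θ : ℝ) (hm : 0 < m)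
    (hF : 0 < 1 - 2 * m * R) (hθ : Real.sin θ ≠ 0) :
    let F : ℝ := 1 - 2 * m * R
    -- κ̂ = m̂^a l̂^b ∇_b l̂_a = 0
    cont m mv (lv m) (lv m) u R θ = 0 ∧
    -- σ̂ = m̂^a m̂^b ∇_b l̂_a = 0
    cont m mv mv (lv m) u R θ = 0 ∧
    -- ρ̂ = m̂^a m̄̂^b ∇_b l̂_a = 0
    cont m mv mbv (lv m) u R θ = 0 ∧
    -- τ̂ = m̂^a n̂^b ∇_b l̂_a = 0
    cont m mv (nv m) (lv m) u R θ = 0 ∧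
    -- ν̂ = -m̄̂^a n̂^b ∇_b n̂_a = 0
    -cont m mbv (nv m) (nv m) u R θ = 0 ∧
    -- λ̂ = -m̄̂^a m̄̂^b ∇_b n̂_a = 0
    -cont m mbv mbv (nv m) u R θ = 0 ∧
    -- μ̂ = -m̄̂^a m̂^b ∇_b n̂_a = 0
    -cont m mbv mv (nv m) u R θ = 0 ∧
    -- π̂ = -m̄̂^a l̂^b ∇_b n̂_a = 0
    -cont m mbv (lv m) (nv m) u R θ = 0 ∧
    -- ε̂ = ½(n̂^a l̂^b ∇_b l̂_a - m̄̂^a l̂^b ∇_b m̂_a) = m/(2√(2F))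
    (1 / 2 : ℂ) * (cont m (nv m) (lv m) (lv m) u R θ - cont m mbv (lv m) mv u R θ)
      = ((m / (2 * Real.sqrt (2 * F)) : ℝ) : ℂ) ∧
    -- γ̂ = ½(n̂^a n̂^b ∇_b l̂_a - m̄̂^a n̂^b ∇_b m̂_a) = (5mR² - 2R)/(2√(2F))
    (1 / 2 : ℂ) * (cont m (nv m) (nv m) (lv m) u R θ - cont m mbv (nv m) mv u R θ)
      = (((5 * m * R ^ 2 - 2 * R) / (2 * Real.sqrt (2 * F)) : ℝ) : ℂ) ∧
    -- β̂ = ½(n̂^a m̂^b ∇_b l̂_a - m̄̂^a m̂^b ∇_b m̂_a) = cot θ/(2√2)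
    (1 / 2 : ℂ) * (cont m (nv m) mv (lv m) u R θ - cont m mbv mv mv u R θ)
      = ((Real.cos θ / Real.sin θ / (2 * Real.sqrt 2) : ℝ) : ℂ) ∧
    -- α̂ = ½(n̂^a m̄̂^b ∇_b l̂_a - m̄̂^a m̄̂^b ∇_b m̂_a) = -cot θ/(2√2)
    (1 / 2 : ℂ) * (cont m (nv m) mbv (lv m) u R θ - cont m mbv mbv mv u R θ)
      = -((Real.cos θ / Real.sin θ / (2 * Real.sqrt 2) : ℝ) : ℂ) := by
  intro F
  have hcoeff := rescaled_spin_coefficients_general m u R θ hF hθ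
  have hl (Y) : cont m mv Y (lv m) u R θ = 0 := (hcoeff Y).1
  have hn (Y) : -cont m mbv Y (nv m) u R θ = 0 := neg_eq_zero.mpr (hcoeff Y).2.1
  exact ⟨hl _, hl _, hl _, hl _, hn _, hn _, hn _, hn _,
    (hcoeff _).2.2.trans (half_sum_spinConnectionForm_mul_lv u θ hF),
    (hcoeff _).2.2.trans (half_sum_spinConnectionForm_mul_nv u θ hF.ne'),
    (hcoeff _).2.2.trans (half_sum_spinConnectionForm_mul_mv m u R θ),
    (hcoeff _).2.2.trans (half_sum_spinConnectionForm_mul_mbv m u R θ)⟩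

end Stmt13
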